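/- Fix t > 0, set r = √(t/(1+t)), r' = 1/√(1+t), A = r'·exp(μ(r')), and B = r·exp((2/π)·𝒦(r)·𝒦'(r) − μ(r')). The function g(K) = A^{−K}·B^{1/K}·(η_K(t)/(t^{1/K}·(1+t)^{K−1/K}))^{1/2} is strictly decreasing on [1, ∞), with g(1) = B/A and g(K) → 1/4 as K → ∞, so g maps [1, ∞) onto (1/4, B/A]. In particular, for every K > 1, (1/16)·A^{2K}·B^{−2/K} < η_K(t)/(t^{1/K}·(1+t)^{K−1/K}) < A^{2(K−1)}·B^{2(1−1/K)} ≤ 16^{K−1}·c^{2(1−1/K)}, where c = (1/8)·exp(2·𝒦(1/√2)²/π). -/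

import Mathlib

open Set Filter

/-- Complete elliptic integral of the first kind. -/
noncomputable def ellK (r : ℝ) : ℝ :=
  ∫ θ in (0:ℝ)..(Real.pi / 2), (1 - r ^ 2 * Real.sin θ ^ 2) ^ (-(1/2) : ℝ)

/-- The Grötzsch modulus μ(r) = (π/2)·𝒦'(r)/𝒦(r). -/
noncomputable def mu (r : ℝ) : ℝ :=
  Real.pi / 2 * ellK (Real.sqrt (1 - r ^ 2)) / ellK r

open Topology MeasureTheory

/-- Weighted integral with exponent -1/2. -/
noncomputable def I0 (w : ℝ → ℝ) (m : ℝ) : ℝ :=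
  ∫ θ in (0:ℝ)..(Real.pi / 2), w θ * (1 - m * Real.sin θ ^ 2) ^ (-(1/2) : ℝ)

/-- Weighted integral with exponent -3/2. -/
noncomputable def I1 (w : ℝ → ℝ) (m : ℝ) : ℝ :=
  ∫ θ in (0:ℝ)..(Real.pi / 2), w θ * (1 - m * Real.sin θ ^ 2) ^ (-(3/2) : ℝ)

noncomputable def kk (m : ℝ) : ℝ := I0 (fun _ => 1) m

noncomputable def hh (m : ℝ) : ℝ := I0 (fun θ => Real.cos θ ^ 2) m

theorem ellK_eq (r : ℝ) : ellK r = kk (r ^ 2) := by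
  simp [ellK, kk, I0]

theorem Dpos {m : ℝ} (hm : m < 1) (θ : ℝ) : 0 < 1 - m * Real.sin θ ^ 2 := by
  have h1 : Real.sin θ ^ 2 ≤ 1 := Real.sin_sq_le_one θ
  have h0 := sq_nonneg (Real.sin θ)
  rcases le_or_gt m 0 with h | h
  · nlinarith
  · nlinarith

theorem Dcont {m : ℝ} (hm : m < 1) (p : ℝ) :
    Continuous (fun θ : ℝ => (1 - m * Real.sin θ ^ 2) ^ p) := by
  refine Continuous.rpow_const (by fun_prop) (fun θ => Or.inl (Dpos hm θ).ne')

theorem D_half {m : ℝ} (hm : m < 1) (θ : ℝ) :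
    (1 - m * Real.sin θ ^ 2) ^ (-(1/2) : ℝ)
      = (1 - m * Real.sin θ ^ 2) * (1 - m * Real.sin θ ^ 2) ^ (-(3/2) : ℝ) := by
  have h := Real.rpow_add (Dpos hm θ) 1 (-(3/2))
  rw [Real.rpow_one] at h
  rw [← h]; norm_num

theorem hasDerivAt_I0 {w : ℝ → ℝ} (hw : Continuous w) {m : ℝ} (hm : m < 1) :
    HasDerivAt (I0 w) (I1 (fun θ => w θ * (Real.sin θ ^ 2 / 2)) m) m := by
  set b : ℝ := (1 + m) / 2 with hb
  have hb1 : b < 1 := by rw [hb]; linarith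
  have hmb : m < b := by rw [hb]; linarith
  set δ : ℝ := min 1 (1 - b) with hδ
  have hδ0 : 0 < δ := lt_min one_pos (by linarith)
  have hD : ∀ x ∈ Iio b, ∀ θ : ℝ, δ ≤ 1 - x * Real.sin θ ^ 2 := by
    intro x hx θ
    have hx' : x < b := hx
    have h1 : Real.sin θ ^ 2 ≤ 1 := Real.sin_sq_le_one θ
    have h0 := sq_nonneg (Real.sin θ)
    rcases le_or_gt x 0 with h | h
    · exact (min_le_left _ _).trans (by nlinarith)
    · exact (min_le_right _ _).trans (by nlinarith)
  have := intervalIntegral.hasDerivAt_integral_of_dominated_loc_of_deriv_le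
    (μ := volume) (a := 0) (b := Real.pi / 2) (𝕜 := ℝ) (E := ℝ)
    (F := fun x θ => w θ * (1 - x * Real.sin θ ^ 2) ^ (-(1/2) : ℝ))
    (F' := fun x θ => w θ * (Real.sin θ ^ 2 / 2) * (1 - x * Real.sin θ ^ 2) ^ (-(3/2) : ℝ))
    (x₀ := m) (s := Iio b) (bound := fun θ => |w θ| * δ ^ (-(3/2) : ℝ))
    (Iio_mem_nhds hmb) ?_ ?_ ?_ ?_ ?_ ?_
  · exact this.2
  · filter_upwards [Iio_mem_nhds hm] with x hx
    exact (hw.mul (Dcont hx _)).aestronglyMeasurable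
  · exact (hw.mul (Dcont hm _)).intervalIntegrable _ _
  · exact ((hw.mul (by fun_prop)).mul (Dcont hm _)).aestronglyMeasurable
  · refine Eventually.of_forall (fun θ _ x hx => ?_)
    have h1 : Real.sin θ ^ 2 ≤ 1 := Real.sin_sq_le_one θ
    have h0 := sq_nonneg (Real.sin θ)
    have h2 : (1 - x * Real.sin θ ^ 2) ^ (-(3/2) : ℝ) ≤ δ ^ (-(3/2) : ℝ) :=
      Real.rpow_le_rpow_of_nonpos hδ0 (hD x hx θ) (by norm_num)
    have h3 : 0 ≤ (1 - x * Real.sin θ ^ 2) ^ (-(3/2) : ℝ) :=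
      Real.rpow_nonneg (hδ0.le.trans (hD x hx θ)) _
    rw [Real.norm_eq_abs, abs_mul, abs_mul, abs_of_nonneg h3, abs_of_nonneg (by positivity : 0 ≤ Real.sin θ ^ 2 / 2)]
    apply mul_le_mul _ h2 h3 (abs_nonneg _)
    nlinarith [abs_nonneg (w θ)]
  · exact (by fun_prop : Continuous fun θ => |w θ| * δ ^ (-(3/2) : ℝ)).intervalIntegrable _ _
  · refine Eventually.of_forall (fun θ _ x hx => ?_)
    have hp : 0 < 1 - x * Real.sin θ ^ 2 := hδ0.trans_le (hD x hx θ)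
    have h1 : HasDerivAt (fun x : ℝ => 1 - x * Real.sin θ ^ 2) (-(Real.sin θ ^ 2)) x := by
      simpa using ((hasDerivAt_id x).mul_const (Real.sin θ ^ 2)).const_sub 1
    have h2 := (h1.rpow_const (p := (-(1/2) : ℝ)) (Or.inl hp.ne')).const_mul (w θ)
    refine h2.congr_deriv ?_
    have e : (-(1/2) : ℝ) - 1 = -(3/2) := by norm_num
    rw [e]
    ring

theorem ibp {m : ℝ} (hm : m < 1) :
    I1 (fun θ => Real.cos θ ^ 2 - Real.sin θ ^ 2 + m * Real.sin θ ^ 4) m = 0 := by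
  have key := intervalIntegral.integral_eq_sub_of_hasDerivAt (a := 0) (b := Real.pi / 2)
    (f := fun θ => Real.sin θ * Real.cos θ * (1 - m * Real.sin θ ^ 2) ^ (-(1/2) : ℝ))
    (f' := fun θ => (Real.cos θ ^ 2 - Real.sin θ ^ 2 + m * Real.sin θ ^ 4) *
      (1 - m * Real.sin θ ^ 2) ^ (-(3/2) : ℝ)) ?_ ?_
  · rw [I1, key]; simp
  · intro θ _
    have h1 : HasDerivAt (fun θ : ℝ => 1 - m * Real.sin θ ^ 2)
        (-(m * (2 * Real.sin θ * Real.cos θ))) θ := by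
      have := (((Real.hasDerivAt_sin θ).pow 2).const_mul m).const_sub 1
      simpa using this
    have h2 := ((Real.hasDerivAt_sin θ).mul (Real.hasDerivAt_cos θ)).mul
      (h1.rpow_const (p := (-(1/2) : ℝ)) (Or.inl (Dpos hm θ).ne'))
    refine h2.congr_deriv ?_
    have e : (-(1/2) : ℝ) - 1 = -(3/2) := by norm_num
    rw [e]
    simp only [Pi.mul_apply]
    rw [D_half hm θ]
    have hc : Real.cos θ ^ 2 = 1 - Real.sin θ ^ 2 := by
      linarith [Real.sin_sq_add_cos_sq θ]
    linear_combination (m * Real.sin θ ^ 2 * (1 - m * Real.sin θ ^ 2) ^ (-(3/2) : ℝ)) * (1 - 1) * hc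
  · exact (Continuous.mul (by fun_prop) (Dcont hm _)).intervalIntegrable _ _

theorem I1_int {w : ℝ → ℝ} (hw : Continuous w) {m : ℝ} (hm : m < 1) :
    IntervalIntegrable (fun θ => w θ * (1 - m * Real.sin θ ^ 2) ^ (-(3/2) : ℝ)) volume 0
      (Real.pi / 2) := (hw.mul (Dcont hm _)).intervalIntegrable _ _

theorem I0_int {w : ℝ → ℝ} (hw : Continuous w) {m : ℝ} (hm : m < 1) :
    IntervalIntegrable (fun θ => w θ * (1 - m * Real.sin θ ^ 2) ^ (-(1/2) : ℝ)) volume 0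
      (Real.pi / 2) := (hw.mul (Dcont hm _)).intervalIntegrable _ _

theorem I0_eq_I1 {w : ℝ → ℝ} {m : ℝ} (hm : m < 1) :
    I0 w m = I1 (fun θ => w θ * (1 - m * Real.sin θ ^ 2)) m := by
  unfold I0 I1
  refine intervalIntegral.integral_congr (fun θ _ => ?_)
  simp only
  rw [D_half hm θ]; ring

theorem I1_add {v w : ℝ → ℝ} (hv : Continuous v) (hw : Continuous w) {m : ℝ} (hm : m < 1) (a b : ℝ) :
    I1 (fun θ => a * v θ + b * w θ) m = a * I1 v m + b * I1 w m := by
  unfold I1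
  rw [← intervalIntegral.integral_const_mul, ← intervalIntegral.integral_const_mul,
    ← intervalIntegral.integral_add ((I1_int hv hm).const_mul _) ((I1_int hw hm).const_mul _)]
  refine intervalIntegral.integral_congr (fun θ _ => ?_)
  simp only
  ring

theorem hasDerivAt_kk {m : ℝ} (hm : m < 1) : HasDerivAt kk (hh m / (2 * (1 - m))) m := by
  have h := hasDerivAt_I0 (w := fun _ => 1) continuous_const hm
  refine HasDerivAt.congr_deriv (f := kk) h ?_
  have e1 : hh m = I1 (fun θ => 2 * (1 - m) * (1 * (Real.sin θ ^ 2 / 2)) +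
      1 * (Real.cos θ ^ 2 - Real.sin θ ^ 2 + m * Real.sin θ ^ 4)) m := by
    rw [hh, I0_eq_I1 hm]
    congr 1
    ext θ
    have hc : Real.cos θ ^ 2 = 1 - Real.sin θ ^ 2 := by
      linarith [Real.sin_sq_add_cos_sq θ]
    rw [hc]; ring
  rw [I1_add (by fun_prop) (by fun_prop) hm, ibp hm] at e1
  rw [e1]
  have : (1 - m) ≠ 0 := by linarith
  field_simp
  ring

/-- derivative of `hh`, as an integral -/
noncomputable def hd (m : ℝ) : ℝ := I1 (fun θ => Real.cos θ ^ 2 * (Real.sin θ ^ 2 / 2)) m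

theorem hasDerivAt_hh {m : ℝ} (hm : m < 1) : HasDerivAt hh (hd m) m :=
  hasDerivAt_I0 (w := fun θ => Real.cos θ ^ 2) (by fun_prop) hm

theorem kk_hh_hd {m : ℝ} (hm : m < 1) : hh m + m * hd m = kk m / 2 := by
  have e0 : kk m = 2 * (hh m + m * hd m) - I1 (fun θ => Real.cos θ ^ 2 - Real.sin θ ^ 2 + m * Real.sin θ ^ 4) m := by
    rw [kk, hh, hd, I0_eq_I1 hm, I0_eq_I1 hm]
    have e1 := I1_add (v := fun θ => Real.cos θ ^ 2 * (1 - m * Real.sin θ ^ 2))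
      (w := fun θ => Real.cos θ ^ 2 * (Real.sin θ ^ 2 / 2)) (by fun_prop) (by fun_prop) hm 1 m
    rw [one_mul] at e1
    rw [← e1]
    have e2 := I1_add (v := fun θ => 1 * (Real.cos θ ^ 2 * (1 - m * Real.sin θ ^ 2)) + m * (Real.cos θ ^ 2 * (Real.sin θ ^ 2 / 2)))
      (w := fun θ => Real.cos θ ^ 2 - Real.sin θ ^ 2 + m * Real.sin θ ^ 4) (by fun_prop) (by fun_prop) hm 2 (-1)
    rw [neg_one_mul, ← sub_eq_add_neg] at e2
    rw [← e2]
    congr 1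
    ext θ
    have hc : Real.cos θ ^ 2 = 1 - Real.sin θ ^ 2 := by
      linarith [Real.sin_sq_add_cos_sq θ]
    rw [hc]; ring
  rw [ibp hm] at e0
  linarith

theorem I0_mono {v w : ℝ → ℝ} {m n : ℝ} (hv : Continuous v) (hw : Continuous w) (hm : m < 1) (hn : n < 1)
    (h : ∀ θ ∈ Icc (0:ℝ) (Real.pi / 2), v θ * (1 - m * Real.sin θ ^ 2) ^ (-(1/2) : ℝ)
      ≤ w θ * (1 - n * Real.sin θ ^ 2) ^ (-(1/2) : ℝ)) : I0 v m ≤ I0 w n :=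
  intervalIntegral.integral_mono_on (by positivity) (I0_int hv hm) (I0_int hw hn) h

theorem kk_zero : kk 0 = Real.pi / 2 := by simp [kk, I0]

theorem hh_zero : hh 0 = Real.pi / 4 := by
  simp [hh, I0, integral_cos_sq]; ring

theorem hd_nonneg {m : ℝ} (hm : m < 1) : 0 ≤ hd m := by
  refine intervalIntegral.integral_nonneg (by positivity) (fun θ _ => ?_)
  have := Real.rpow_nonneg (Dpos hm θ).le (-(3/2))
  positivity

theorem kk_ge {m : ℝ} (h0 : 0 ≤ m) (hm : m < 1) : Real.pi / 2 ≤ kk m := by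
  rw [← kk_zero]
  refine I0_mono continuous_const continuous_const one_pos hm (fun θ _ => ?_)
  have := sq_nonneg (Real.sin θ)
  have := Real.rpow_le_rpow_of_nonpos (z := -(1/2)) (Dpos hm θ)
    (show 1 - m * Real.sin θ ^ 2 ≤ 1 - 0 * Real.sin θ ^ 2 by nlinarith) (by norm_num)
  simpa using this

theorem hh_ge {m : ℝ} (h0 : 0 ≤ m) (hm : m < 1) : Real.pi / 4 ≤ hh m := by
  rw [← hh_zero]
  refine I0_mono (by fun_prop) (by fun_prop) one_pos hm (fun θ _ => ?_)
  have := sq_nonneg (Real.sin θ)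
  have := Real.rpow_le_rpow_of_nonpos (z := -(1/2)) (Dpos hm θ)
    (show 1 - m * Real.sin θ ^ 2 ≤ 1 - 0 * Real.sin θ ^ 2 by nlinarith) (by norm_num)
  gcongr

theorem kk_pos {m : ℝ} (h0 : 0 ≤ m) (hm : m < 1) : 0 < kk m :=
  (by positivity : 0 < Real.pi / 2).trans_le (kk_ge h0 hm)

theorem hh_pos {m : ℝ} (h0 : 0 ≤ m) (hm : m < 1) : 0 < hh m :=
  (by positivity : 0 < Real.pi / 4).trans_le (hh_ge h0 hm)

theorem hh_le {m : ℝ} (h0 : 0 ≤ m) (hm : m < 1) : 2 * hh m ≤ kk m := by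
  have := kk_hh_hd hm
  have := mul_nonneg h0 (hd_nonneg hm)
  linarith

theorem kk_le {m : ℝ} (_h0 : 0 ≤ m) (hm : m < 1) :
    kk m ≤ Real.pi / 2 * (1 - m) ^ (-(1/2) : ℝ) := by
  have : Real.pi / 2 * (1 - m) ^ (-(1/2) : ℝ) =
    ∫ θ in (0:ℝ)..(Real.pi / 2), (1 - m) ^ (-(1/2) : ℝ) := by simp
  rw [this]
  refine intervalIntegral.integral_mono_on (by positivity) (I0_int continuous_const hm)
    (continuous_const.intervalIntegrable _ _) (fun θ _ => ?_)
  rw [one_mul]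
  have h1 : Real.sin θ ^ 2 ≤ 1 := Real.sin_sq_le_one θ
  exact Real.rpow_le_rpow_of_nonpos (by linarith) (by nlinarith) (by norm_num)

theorem hd_le {m : ℝ} (h0 : 0 ≤ m) (hm : m ≤ 1 / 2) :
    hd m ≤ Real.sqrt 2 * Real.pi / 16 := by
  have e : (1 / 2 : ℝ) ^ (-(3/2) : ℝ) = 2 * Real.sqrt 2 := by
    rw [one_div, Real.inv_rpow (by norm_num), Real.rpow_neg (by norm_num), inv_inv,
      show (3 / 2 : ℝ) = 1 + 1 / 2 by norm_num, Real.rpow_add (by norm_num), Real.rpow_one,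
      Real.sqrt_eq_rpow]
  have : Real.sqrt 2 * Real.pi / 16 = ∫ θ in (0:ℝ)..(Real.pi / 2),
      Real.sqrt 2 * (Real.sin θ ^ 2 * Real.cos θ ^ 2) := by
    rw [intervalIntegral.integral_const_mul, integral_sin_sq_mul_cos_sq]
    rw [show 4 * (Real.pi / 2) = 2 * Real.pi by ring]
    simp
    ring
  rw [this]
  refine intervalIntegral.integral_mono_on (by positivity) (I1_int (by fun_prop) (by linarith))
    (Continuous.intervalIntegrable (by fun_prop) _ _) (fun θ _ => ?_)
  have h1 : Real.sin θ ^ 2 ≤ 1 := Real.sin_sq_le_one θ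
  have h2 : (1 - m * Real.sin θ ^ 2) ^ (-(3/2) : ℝ) ≤ (1 / 2 : ℝ) ^ (-(3/2) : ℝ) :=
    Real.rpow_le_rpow_of_nonpos (by norm_num) (by nlinarith) (by norm_num)
  rw [e] at h2
  have h3 : 0 ≤ Real.cos θ ^ 2 * (Real.sin θ ^ 2 / 2) := by positivity
  nlinarith [mul_le_mul_of_nonneg_left h2 h3]

theorem hd_pos {m : ℝ} (h0 : 0 ≤ m) (hm : m < 1) : 0 < hd m := by
  have : Real.pi / 32 = ∫ θ in (0:ℝ)..(Real.pi / 2),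
      (1 / 2) * (Real.sin θ ^ 2 * Real.cos θ ^ 2) := by
    rw [intervalIntegral.integral_const_mul, integral_sin_sq_mul_cos_sq]
    rw [show 4 * (Real.pi / 2) = 2 * Real.pi by ring]
    simp
    ring
  refine (by positivity : 0 < Real.pi / 32).trans_le ?_
  rw [this]
  refine intervalIntegral.integral_mono_on (by positivity)
    (Continuous.intervalIntegrable (by fun_prop) _ _) (I1_int (by fun_prop) hm) (fun θ _ => ?_)
  have h2 : 1 ≤ (1 - m * Real.sin θ ^ 2) ^ (-(3/2) : ℝ) :=
    Real.one_le_rpow_of_pos_of_le_one_of_nonpos (Dpos hm θ)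
      (by nlinarith [sq_nonneg (Real.sin θ)]) (by norm_num)
  have h3 : 0 ≤ Real.cos θ ^ 2 * (Real.sin θ ^ 2 / 2) := by positivity
  nlinarith [mul_le_mul_of_nonneg_left h2 h3]

theorem hh_strictMono : StrictMonoOn hh (Ico 0 1) := by
  refine strictMonoOn_of_deriv_pos (convex_Ico 0 1)
    (fun x hx => (hasDerivAt_hh hx.2).continuousAt.continuousWithinAt) (fun x hx => ?_)
  rw [interior_Ico] at hx
  rw [(hasDerivAt_hh hx.2).deriv]
  exact hd_pos hx.1.le hx.2

theorem hh_lt_one {m : ℝ} (h0 : 0 ≤ m) (hm : m < 1) : hh m < 1 := by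
  have e : (1:ℝ) = ∫ θ in (0:ℝ)..(Real.pi / 2), Real.cos θ := by simp
  have hle : ∀ n, 0 ≤ n → n < 1 → hh n ≤ 1 := by
    intro n hn0 hn
    rw [e]
    refine intervalIntegral.integral_mono_on (by positivity) (I0_int (by fun_prop) hn)
      (Continuous.intervalIntegrable (by fun_prop) _ _) (fun θ hθ => ?_)
    have hc : 0 ≤ Real.cos θ := Real.cos_nonneg_of_mem_Icc ⟨by linarith [hθ.1, Real.pi_pos], hθ.2⟩
    rcases hc.eq_or_lt with h | h
    · simp [← h]
    have h2 : (1 - n * Real.sin θ ^ 2) ^ (-(1/2) : ℝ) ≤ (Real.cos θ ^ 2) ^ (-(1/2) : ℝ) := by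
      refine Real.rpow_le_rpow_of_nonpos (by positivity) ?_ (by norm_num)
      nlinarith [Real.sin_sq_add_cos_sq θ, sq_nonneg (Real.sin θ)]
    have h3 : (Real.cos θ ^ 2) ^ (-(1/2) : ℝ) = (Real.cos θ)⁻¹ := by
      rw [← Real.rpow_natCast, ← Real.rpow_mul hc]
      norm_num
      rw [Real.rpow_neg_one]
    rw [h3] at h2
    calc _ ≤ Real.cos θ ^ 2 * (Real.cos θ)⁻¹ := by gcongr
      _ = Real.cos θ := by field_simp
  exact (hh_strictMono ⟨h0, hm⟩ ⟨by linarith, by linarith⟩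
    (by linarith : m < (1 + m) / 2)).trans_le (hle _ (by linarith) (by linarith))

theorem cos_sq_rpow {x : ℝ} (hc : 0 ≤ x) : (x ^ 2) ^ (-(1/2) : ℝ) = x⁻¹ := by
  rw [← Real.rpow_natCast, ← Real.rpow_mul hc]
  norm_num
  rw [Real.rpow_neg_one]

theorem I0_tendsto {w : ℝ → ℝ} (hw : Continuous w)
    (hb : ∀ θ ∈ Icc (0:ℝ) (Real.pi / 2), |w θ| ≤ Real.cos θ) :
    Tendsto (fun m => I0 w (1 - m)) (𝓝[>] 0)
      (𝓝 (∫ θ in (0:ℝ)..(Real.pi / 2), w θ * (Real.cos θ)⁻¹)) := by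
  have hmem : ∀ᶠ m in 𝓝[>] (0:ℝ), m ∈ Ioo (0:ℝ) 1 := Ioo_mem_nhdsGT one_pos
  unfold I0
  refine intervalIntegral.tendsto_integral_filter_of_dominated_convergence (fun _ => (1:ℝ)) ?_ ?_ ?_ ?_
  · filter_upwards [hmem] with m hm
    exact (hw.mul (Dcont (by linarith [hm.1]) _)).aestronglyMeasurable
  · filter_upwards [hmem] with m hm
    refine Eventually.of_forall (fun θ hθ => ?_)
    rw [uIoc_of_le (by positivity)] at hθ
    have hc : 0 ≤ Real.cos θ := Real.cos_nonneg_of_mem_Icc ⟨by linarith [hθ.1, Real.pi_pos], hθ.2⟩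
    have hwθ := hb θ ⟨hθ.1.le, hθ.2⟩
    have hD := Dpos (show 1 - m < 1 by linarith [hm.1]) θ
    have h3 := Real.rpow_nonneg hD.le (-(1/2))
    rw [Real.norm_eq_abs, abs_mul, abs_of_nonneg h3]
    rcases hc.eq_or_lt with h | h
    · have : |w θ| = 0 := le_antisymm (by rw [h]; exact hwθ) (abs_nonneg _)
      rw [this]; simp
    have h2 : (1 - (1 - m) * Real.sin θ ^ 2) ^ (-(1/2) : ℝ) ≤ (Real.cos θ ^ 2) ^ (-(1/2) : ℝ) := by
      refine Real.rpow_le_rpow_of_nonpos (by positivity) ?_ (by norm_num)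
      nlinarith [Real.sin_sq_add_cos_sq θ, sq_nonneg (Real.sin θ), hm.1]
    rw [cos_sq_rpow hc] at h2
    calc _ ≤ Real.cos θ * (Real.cos θ)⁻¹ := by gcongr
      _ = 1 := by field_simp
  · exact continuous_const.intervalIntegrable _ _
  · have hne : ∀ᵐ θ : ℝ, θ ≠ Real.pi / 2 := by
      simp [ae_iff, measure_singleton]
    filter_upwards [hne] with θ hθne hθ
    rw [uIoc_of_le (by positivity)] at hθ
    have hc : 0 < Real.cos θ := Real.cos_pos_of_mem_Ioo
      ⟨by linarith [hθ.1, Real.pi_pos], lt_of_le_of_ne hθ.2 hθne⟩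
    refine Tendsto.const_mul _ ?_
    rw [← cos_sq_rpow hc.le]
    have h1 : Tendsto (fun m : ℝ => 1 - (1 - m) * Real.sin θ ^ 2) (𝓝[>] 0) (𝓝 (Real.cos θ ^ 2)) := by
      have : Continuous (fun m : ℝ => 1 - (1 - m) * Real.sin θ ^ 2) := by fun_prop
      have h := (this.tendsto 0).mono_left (nhdsWithin_le_nhds (s := Ioi 0))
      convert h using 2
      linarith [Real.sin_sq_add_cos_sq θ]
    exact h1.rpow_const (Or.inl (by positivity))

theorem hh_tendsto : Tendsto (fun m => hh (1 - m)) (𝓝[>] 0) (𝓝 1) := by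
  have h := I0_tendsto (w := fun θ => Real.cos θ ^ 2) (by fun_prop) (fun θ hθ => by
    have hc : 0 ≤ Real.cos θ := Real.cos_nonneg_of_mem_Icc ⟨by linarith [hθ.1, Real.pi_pos], hθ.2⟩
    rw [abs_of_nonneg (by positivity)]
    nlinarith [Real.cos_le_one θ])
  have e : ∫ θ in (0:ℝ)..(Real.pi / 2), Real.cos θ ^ 2 * (Real.cos θ)⁻¹ = 1 := by
    have : (1:ℝ) = ∫ θ in (0:ℝ)..(Real.pi / 2), Real.cos θ := by simp
    rw [this]
    refine intervalIntegral.integral_congr (fun θ _ => ?_)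
    rcases eq_or_ne (Real.cos θ) 0 with h | h
    · simp [h]
    · field_simp
  rw [e] at h
  exact h

theorem int_log_two : ∫ θ in (0:ℝ)..(Real.pi / 2), (1 - Real.sin θ) * (Real.cos θ)⁻¹ = Real.log 2 := by
  have hpos : ∀ θ ∈ Icc (0:ℝ) (Real.pi / 2), 0 < 1 + Real.sin θ := by
    intro θ hθ
    have := Real.sin_nonneg_of_mem_Icc (x := θ) ⟨hθ.1, by linarith [hθ.2, Real.pi_pos]⟩
    linarith
  have e : ∫ θ in (0:ℝ)..(Real.pi / 2), (1 - Real.sin θ) * (Real.cos θ)⁻¹ =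
      ∫ θ in (0:ℝ)..(Real.pi / 2), Real.cos θ / (1 + Real.sin θ) := by
    refine intervalIntegral.integral_congr (fun θ hθ => ?_)
    rw [uIcc_of_le (by positivity)] at hθ
    have hp := hpos θ hθ
    rcases eq_or_ne (Real.cos θ) 0 with h | h
    · simp [h]
    · field_simp
      linarith [Real.sin_sq_add_cos_sq θ]
  rw [e, intervalIntegral.integral_eq_sub_of_hasDerivAt (f := fun θ => Real.log (1 + Real.sin θ))]
  · simp; norm_num
  · intro θ hθ
    rw [uIcc_of_le (by positivity)] at hθ
    exact ((Real.hasDerivAt_sin θ).const_add 1).log (hpos θ hθ).ne'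
  · refine ContinuousOn.intervalIntegrable ?_
    intro θ hθ
    rw [uIcc_of_le (by positivity)] at hθ
    have hcc : ContinuousAt (fun θ => Real.cos θ / (1 + Real.sin θ)) θ :=
      ContinuousAt.div (by fun_prop) (by fun_prop) (hpos θ hθ).ne'
    exact hcc.continuousWithinAt

theorem J_eq {m : ℝ} (h0 : 0 < m) (hm : m < 1) :
    I0 Real.sin (1 - m) = (Real.log (1 + Real.sqrt (1 - m)) - Real.log m / 2) / Real.sqrt (1 - m) := by
  set q := Real.sqrt (1 - m) with hq
  have hq2 : q ^ 2 = 1 - m := Real.sq_sqrt (by linarith)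
  have hq0 : 0 < q := Real.sqrt_pos.mpr (by linarith)
  have hR : ∀ θ : ℝ, 0 < 1 - (1 - m) * Real.sin θ ^ 2 := Dpos (by linarith)
  have hR2 : ∀ θ : ℝ, 1 - (1 - m) * Real.sin θ ^ 2 = m + (q * Real.cos θ) ^ 2 := by
    intro θ
    rw [mul_pow, hq2]
    nlinarith [Real.sin_sq_add_cos_sq θ]
  have hL : ∀ θ ∈ Icc (0:ℝ) (Real.pi / 2),
      0 < q * Real.cos θ + Real.sqrt (1 - (1 - m) * Real.sin θ ^ 2) := by
    intro θ hθ
    have hc : 0 ≤ Real.cos θ := Real.cos_nonneg_of_mem_Icc ⟨by linarith [hθ.1, Real.pi_pos], hθ.2⟩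
    have := Real.sqrt_pos.mpr (hR θ)
    positivity
  rw [I0, intervalIntegral.integral_eq_sub_of_hasDerivAt
    (f := fun θ => -(Real.log (q * Real.cos θ + Real.sqrt (1 - (1 - m) * Real.sin θ ^ 2)) / q))]
  · simp only [Real.cos_pi_div_two, Real.sin_pi_div_two, Real.cos_zero, Real.sin_zero]
    have : Real.log (Real.sqrt m) = Real.log m / 2 := Real.log_sqrt h0.le
    norm_num
    rw [this]
    field_simp
    rw [add_comm q 1]
    ring
  · intro θ hθ
    rw [uIcc_of_le (by positivity)] at hθ
    have hp := hL θ hθ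
    have h1 : HasDerivAt (fun θ : ℝ => 1 - (1 - m) * Real.sin θ ^ 2)
        (-((1 - m) * (2 * Real.sin θ * Real.cos θ))) θ := by
      have := (((Real.hasDerivAt_sin θ).pow 2).const_mul (1 - m)).const_sub 1
      simpa using this
    have h2 := (((((Real.hasDerivAt_cos θ).const_mul q).add (h1.sqrt (hR θ).ne')).log hp.ne').div_const q).neg
    refine h2.congr_deriv ?_
    have e : (1 - (1 - m) * Real.sin θ ^ 2) ^ (-(1/2) : ℝ) = (Real.sqrt (1 - (1 - m) * Real.sin θ ^ 2))⁻¹ := by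
      rw [Real.rpow_neg (hR θ).le, Real.sqrt_eq_rpow]
    rw [e]
    simp only [Pi.add_apply]
    have hs := Real.sqrt_pos.mpr (hR θ)
    set S := Real.sqrt (1 - (1 - m) * Real.sin θ ^ 2)
    rw [← hq2]
    field_simp
    ring
  · exact I0_int Real.continuous_sin (by linarith)

theorem log_mul_self_tendsto : Tendsto (fun x : ℝ => Real.log x * x) (𝓝[>] 0) (𝓝 0) := by
  simpa only [Real.rpow_one] using tendsto_log_mul_rpow_nhdsGT_zero zero_lt_one

theorem J_tendsto : Tendsto (fun m => I0 Real.sin (1 - m) + Real.log m / 2) (𝓝[>] 0)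
    (𝓝 (Real.log 2)) := by
  have hmem : ∀ᶠ m in 𝓝[>] (0:ℝ), m ∈ Ioo (0:ℝ) 1 := Ioo_mem_nhdsGT one_pos
  have hq : Tendsto (fun m : ℝ => Real.sqrt (1 - m)) (𝓝[>] 0) (𝓝 1) := by
    have : Continuous (fun m : ℝ => Real.sqrt (1 - m)) := by fun_prop
    have h := (this.tendsto 0).mono_left (nhdsWithin_le_nhds (s := Ioi 0))
    simpa using h
  have h1 : Tendsto (fun m : ℝ => Real.log (1 + Real.sqrt (1 - m)) / Real.sqrt (1 - m)
      - (Real.log m * m) * (1 / (2 * Real.sqrt (1 - m) * (1 + Real.sqrt (1 - m))))) (𝓝[>] 0)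
      (𝓝 (Real.log (1 + 1) / 1 - 0 * (1 / (2 * 1 * (1 + 1))))) := by
    refine Tendsto.sub ?_ (log_mul_self_tendsto.mul ?_)
    · exact ((hq.const_add 1).log (by norm_num)).div hq (by norm_num)
    · exact tendsto_const_nhds.div ((hq.const_mul 2).mul (hq.const_add 1)) (by norm_num)
  have e : Real.log (1 + 1) / 1 - 0 * (1 / (2 * 1 * (1 + 1))) = Real.log 2 := by norm_num
  rw [e] at h1
  refine h1.congr' ?_
  filter_upwards [hmem] with m hm
  rw [J_eq hm.1 hm.2]
  have hq0 : 0 < Real.sqrt (1 - m) := Real.sqrt_pos.mpr (by linarith [hm.2])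
  have hq2 : Real.sqrt (1 - m) ^ 2 = 1 - m := Real.sq_sqrt (by linarith [hm.2])
  set q := Real.sqrt (1 - m)
  have : m = 1 - q ^ 2 := by linarith
  field_simp
  generalize Real.log m = L
  rw [this]
  ring

theorem kk_tendsto_log : Tendsto (fun m => kk (1 - m) + Real.log m / 2) (𝓝[>] 0)
    (𝓝 (Real.log 4)) := by
  have hmem : ∀ᶠ m in 𝓝[>] (0:ℝ), m ∈ Ioo (0:ℝ) 1 := Ioo_mem_nhdsGT one_pos
  have h1 := I0_tendsto (w := fun θ => 1 - Real.sin θ) (by fun_prop) (fun θ hθ => by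
    have hc : 0 ≤ Real.cos θ := Real.cos_nonneg_of_mem_Icc ⟨by linarith [hθ.1, Real.pi_pos], hθ.2⟩
    have hs := Real.sin_nonneg_of_mem_Icc (x := θ) ⟨hθ.1, by linarith [hθ.2, Real.pi_pos]⟩
    have hs1 := Real.sin_le_one θ
    rw [abs_of_nonneg (by linarith)]
    refine abs_le_of_sq_le_sq' ?_ hc |>.2
    nlinarith [Real.sin_sq_add_cos_sq θ])
  rw [int_log_two] at h1
  have h2 := h1.add J_tendsto
  have e : Real.log 2 + Real.log 2 = Real.log 4 := by
    rw [← Real.log_mul (by norm_num) (by norm_num)]; norm_num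
  rw [e] at h2
  refine h2.congr' ?_
  filter_upwards [hmem] with m hm
  have hm1 : 1 - m < 1 := by linarith [hm.1]
  have : kk (1 - m) = I0 (fun θ => 1 - Real.sin θ) (1 - m) + I0 Real.sin (1 - m) := by
    unfold kk I0
    rw [← intervalIntegral.integral_add (I0_int (by fun_prop) hm1) (I0_int (by fun_prop) hm1)]
    refine intervalIntegral.integral_congr (fun θ _ => ?_)
    simp only
    ring
  rw [this]; ring

theorem kk_tendsto_zero : Tendsto kk (𝓝[>] 0) (𝓝 (Real.pi / 2)) := by
  have := (hasDerivAt_kk one_pos).continuousAt.tendsto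
  rw [kk_zero] at this
  exact this.mono_left nhdsWithin_le_nhds

theorem mkk_tendsto : Tendsto (fun m => m * kk (1 - m)) (𝓝[>] 0) (𝓝 0) := by
  have hid : Tendsto (fun m : ℝ => m) (𝓝[>] 0) (𝓝 0) := tendsto_id.mono_left nhdsWithin_le_nhds
  have h := (hid.mul kk_tendsto_log).sub (log_mul_self_tendsto.div_const 2)
  simp only [zero_mul, zero_div, sub_zero] at h
  refine h.congr (fun m => ?_)
  ring

/-- Derivative of the complementary functions. -/
theorem hasDerivAt_kk' {m : ℝ} (h0 : 0 < m) :
    HasDerivAt (fun m => kk (1 - m)) (-(hh (1 - m) / (2 * m))) m := by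
  have h := (hasDerivAt_kk (m := 1 - m) (by linarith)).scomp m ((hasDerivAt_id m).const_sub 1)
  refine HasDerivAt.congr_deriv (f := fun m => kk (1 - m)) h ?_
  simp

theorem hasDerivAt_hh' {m : ℝ} (h0 : 0 < m) :
    HasDerivAt (fun m => hh (1 - m)) (-(hd (1 - m))) m := by
  have h := (hasDerivAt_hh (m := 1 - m) (by linarith)).scomp m ((hasDerivAt_id m).const_sub 1)
  refine HasDerivAt.congr_deriv (f := fun m => hh (1 - m)) h ?_
  simp

/-- Legendre's relation. -/
theorem legendre {m : ℝ} (h0 : 0 < m) (hm : m < 1) :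
    m * hh m * kk (1 - m) + (1 - m) * kk m * hh (1 - m) = Real.pi / 2 := by
  set L : ℝ → ℝ := fun m => m * hh m * kk (1 - m) + (1 - m) * kk m * hh (1 - m) with hL
  have hder : ∀ x ∈ Ioo (0:ℝ) 1, HasDerivAt L 0 x := by
    intro x hx
    have h1 := (((hasDerivAt_id x).mul (hasDerivAt_hh hx.2)).mul (hasDerivAt_kk' hx.1)).add
      ((((hasDerivAt_id x).const_sub 1).mul (hasDerivAt_kk hx.2)).mul (hasDerivAt_hh' hx.1))
    refine HasDerivAt.congr_deriv (f := L) h1 ?_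
    have e1 := kk_hh_hd hx.2
    have e2 := kk_hh_hd (m := 1 - x) (by linarith [hx.1])
    have n1 : x ≠ 0 := hx.1.ne'
    have n2 : 1 - x ≠ 0 := by linarith [hx.2]
    simp only [Pi.mul_apply, id]
    field_simp
    linear_combination (2 * kk (1 - x)) * e1 - (2 * kk x) * e2
  have hconst : ∀ x ∈ Ioo (0:ℝ) 1, L x = L m := by
    intro x hx
    refine isOpen_Ioo.is_const_of_deriv_eq_zero isPreconnected_Ioo
      (fun y hy => (hder y hy).differentiableAt.differentiableWithinAt)
      (fun y hy => (hder y hy).deriv) hx ⟨h0, hm⟩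
  have hlim : Tendsto L (𝓝[>] 0) (𝓝 (Real.pi / 2)) := by
    have hid : Tendsto (fun m : ℝ => m) (𝓝[>] 0) (𝓝 0) := tendsto_id.mono_left nhdsWithin_le_nhds
    have hhh : Tendsto hh (𝓝[>] 0) (𝓝 (hh 0)) :=
      (hasDerivAt_hh one_pos).continuousAt.tendsto.mono_left nhdsWithin_le_nhds
    have h := (hhh.mul mkk_tendsto).add (((hid.const_sub 1).mul kk_tendsto_zero).mul hh_tendsto)
    simp only [mul_zero, sub_zero, one_mul, mul_one, zero_add] at h
    refine h.congr (fun x => ?_)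
    simp only [hL]; ring
  have hmem : ∀ᶠ m in 𝓝[>] (0:ℝ), m ∈ Ioo (0:ℝ) 1 := Ioo_mem_nhdsGT one_pos
  have h2 : Tendsto L (𝓝[>] 0) (𝓝 (L m)) :=
    tendsto_const_nhds.congr' (by filter_upwards [hmem] with x hx; exact (hconst x hx).symm)
  exact tendsto_nhds_unique h2 hlim

noncomputable def MM (m : ℝ) : ℝ := Real.pi / 2 * kk (1 - m) / kk m

theorem hasDerivAt_MM {m : ℝ} (h0 : 0 < m) (hm : m < 1) :
    HasDerivAt MM (-(Real.pi ^ 2 / (8 * m * (1 - m) * kk m ^ 2))) m := by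
  have hk := (kk_pos h0.le hm).ne'
  have h := ((hasDerivAt_kk' h0).const_mul (Real.pi / 2)).div (hasDerivAt_kk hm) hk
  refine HasDerivAt.congr_deriv (f := MM) h ?_
  have hl := legendre h0 hm
  have n1 : m ≠ 0 := h0.ne'
  have n2 : 1 - m ≠ 0 := by linarith
  field_simp
  linear_combination (-8) * hl

theorem MM_pos {m : ℝ} (h0 : 0 < m) (hm : m < 1) : 0 < MM m := by
  have h1 := kk_pos h0.le hm
  have h2 := kk_pos (m := 1 - m) (by linarith) (by linarith)
  unfold MM
  positivity

theorem MM_cont : ContinuousOn MM (Ioo 0 1) :=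
  fun _ hx => (hasDerivAt_MM hx.1 hx.2).continuousAt.continuousWithinAt

theorem MM_anti : StrictAntiOn MM (Ioo 0 1) := by
  refine strictAntiOn_of_deriv_neg (convex_Ioo 0 1) MM_cont (fun x hx => ?_)
  rw [interior_Ioo] at hx
  rw [(hasDerivAt_MM hx.1 hx.2).deriv]
  have h1 := kk_pos hx.1.le hx.2
  have h2 := hx.1
  have h3 : 0 < 1 - x := by linarith [hx.2]
  rw [neg_lt_zero]
  positivity

theorem MM_log_tendsto : Tendsto (fun m => MM m + Real.log m / 2) (𝓝[>] 0) (𝓝 (Real.log 4)) := by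
  have hmem : ∀ᶠ m in 𝓝[>] (0:ℝ), m ∈ Ioo (0:ℝ) 1 := Ioo_mem_nhdsGT one_pos
  have hs : Tendsto (fun m => (kk m - Real.pi / 2) / m) (𝓝[>] 0) (𝓝 (hh 0 / (2 * (1 - 0)))) := by
    have h := (hasDerivAt_iff_tendsto_slope.mp (hasDerivAt_kk one_pos)).mono_left
      (nhdsWithin_mono 0 (fun x (hx : 0 < x) => (hx.ne' : x ≠ 0)) : 𝓝[>] (0:ℝ) ≤ 𝓝[≠] 0)
    refine h.congr (fun x => ?_)
    rw [slope_def_field, kk_zero, sub_zero]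
  have hpi : Real.pi / 2 ≠ 0 := by positivity
  have h := ((tendsto_const_nhds (x := Real.pi / 2)).div kk_tendsto_zero hpi).mul kk_tendsto_log |>.add
    ((log_mul_self_tendsto.mul hs).div (kk_tendsto_zero.const_mul 2) (by positivity))
  rw [div_self hpi] at h
  simp only [one_mul, zero_mul, zero_div, add_zero] at h
  refine h.congr' ?_
  filter_upwards [hmem] with m hm
  have hk := (kk_pos hm.1.le hm.2).ne'
  have hm0 := hm.1.ne'
  simp only [Pi.div_apply]
  unfold MM
  field_simp
  ring

theorem MM_tendsto_atTop : Tendsto MM (𝓝[>] 0) atTop := by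
  have h1 : Tendsto (fun m => -(Real.log m / 2)) (𝓝[>] 0) atTop := by
    have := Real.tendsto_log_nhdsGT_zero.atBot_div_const (r := 2) (by norm_num)
    exact tendsto_neg_atBot_atTop.comp this
  refine (MM_log_tendsto.add_atTop h1).congr (fun m => ?_)
  ring

/-- `(1 - m) * kk m ^ 2` is at most its value at 0. -/
theorem kk_sq_le {m : ℝ} (h0 : 0 ≤ m) (hm : m < 1) : (1 - m) * kk m ^ 2 ≤ (Real.pi / 2) ^ 2 := by
  have hd : ∀ x < 1, HasDerivAt (fun m => (1 - m) * kk m ^ 2) (kk x * hh x - kk x ^ 2) x := by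
    intro x hx
    have h1 := ((hasDerivAt_id x).const_sub 1).mul ((hasDerivAt_kk hx).pow 2)
    refine HasDerivAt.congr_deriv (f := fun m => (1 - m) * kk m ^ 2) h1 ?_
    have n2 : 1 - x ≠ 0 := by linarith
    simp
    field_simp
    ring
  have hanti : AntitoneOn (fun m => (1 - m) * kk m ^ 2) (Ico 0 1) := by
    refine antitoneOn_of_deriv_nonpos (convex_Ico 0 1)
      (fun x hx => (hd x hx.2).continuousAt.continuousWithinAt) ?_ ?_
    · rw [interior_Ico]
      exact fun x hx => (hd x hx.2).differentiableAt.differentiableWithinAt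
    · rw [interior_Ico]
      intro x hx
      rw [(hd x hx.2).deriv]
      have h1 := kk_pos hx.1.le hx.2
      have h2 := hh_le hx.1.le hx.2
      have h3 := hh_pos hx.1.le hx.2
      nlinarith
  have := hanti ⟨le_rfl, one_pos⟩ ⟨h0, hm⟩ h0
  simpa [kk_zero] using this

theorem kk_cube_le {m : ℝ} (h0 : 0 ≤ m) (hm : m < 1) : (1 - m) * kk m ^ 3 ≤ (Real.pi / 2) ^ 3 := by
  have hd : ∀ x < 1, HasDerivAt (fun m => (1 - m) * kk m ^ 3)
      (3 / 2 * kk x ^ 2 * hh x - kk x ^ 3) x := by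
    intro x hx
    have h1 := ((hasDerivAt_id x).const_sub 1).mul ((hasDerivAt_kk hx).pow 3)
    refine HasDerivAt.congr_deriv (f := fun m => (1 - m) * kk m ^ 3) h1 ?_
    have n2 : 1 - x ≠ 0 := by linarith
    simp
    field_simp
    ring
  have hanti : AntitoneOn (fun m => (1 - m) * kk m ^ 3) (Ico 0 1) := by
    refine antitoneOn_of_deriv_nonpos (convex_Ico 0 1)
      (fun x hx => (hd x hx.2).continuousAt.continuousWithinAt) ?_ ?_
    · rw [interior_Ico]
      exact fun x hx => (hd x hx.2).differentiableAt.differentiableWithinAt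
    · rw [interior_Ico]
      intro x hx
      rw [(hd x hx.2).deriv]
      have h1 := kk_pos hx.1.le hx.2
      have h2 := hh_le hx.1.le hx.2
      have h3 := hh_pos hx.1.le hx.2
      have : kk x ^ 2 * (3 / 2 * hh x - kk x) ≤ 0 :=
        mul_nonpos_of_nonneg_of_nonpos (by positivity) (by linarith)
      nlinarith
  have := hanti ⟨le_rfl, one_pos⟩ ⟨h0, hm⟩ h0
  simpa [kk_zero] using this

theorem MM_log_le {m : ℝ} (h0 : 0 < m) (hm : m < 1) : MM m + Real.log m / 2 ≤ Real.log 4 := by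
  have hd : ∀ x ∈ Ioo (0:ℝ) 1, HasDerivAt (fun m => MM m + Real.log m / 2)
      (-(Real.pi ^ 2 / (8 * x * (1 - x) * kk x ^ 2)) + x⁻¹ / 2) x := fun x hx =>
    (hasDerivAt_MM hx.1 hx.2).add ((Real.hasDerivAt_log hx.1.ne').div_const 2)
  have hanti : AntitoneOn (fun m => MM m + Real.log m / 2) (Ioo 0 1) := by
    refine antitoneOn_of_deriv_nonpos (convex_Ioo 0 1)
      (fun x hx => (hd x hx).continuousAt.continuousWithinAt) ?_ ?_
    · rw [interior_Ioo]
      exact fun x hx => (hd x hx).differentiableAt.differentiableWithinAt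
    · rw [interior_Ioo]
      intro x hx
      rw [(hd x hx).deriv]
      have h1 := kk_pos hx.1.le hx.2
      have h2 := kk_sq_le hx.1.le hx.2
      have h3 := hx.1
      have h4 : 0 < 1 - x := by linarith [hx.2]
      have e : -(Real.pi ^ 2 / (8 * x * (1 - x) * kk x ^ 2)) + x⁻¹ / 2 =
        ((1 - x) * kk x ^ 2 - (Real.pi / 2) ^ 2) / (2 * x * (1 - x) * kk x ^ 2) := by
        field_simp
        ring
      rw [e]
      exact div_nonpos_of_nonpos_of_nonneg (by linarith) (by positivity)
  refine ge_of_tendsto MM_log_tendsto ?_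
  filter_upwards [Ioo_mem_nhdsGT h0] with x hx
  exact hanti ⟨hx.1, hx.2.trans hm⟩ ⟨h0, hm⟩ hx.2.le

noncomputable def HH (m : ℝ) : ℝ := kk (1 - m) ^ 2 - MM m ^ 2

theorem HH_mono : StrictMonoOn HH (Ioo 0 1) := by
  have hd : ∀ x ∈ Ioo (0:ℝ) 1, HasDerivAt HH
      (kk (1 - x) / (x * (1 - x) * kk x ^ 3) * ((Real.pi / 2) ^ 3 - (1 - x) * kk x ^ 3 * hh (1 - x))) x := by
    intro x hx
    have h := ((hasDerivAt_kk' hx.1).pow 2).sub ((hasDerivAt_MM hx.1 hx.2).pow 2)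
    refine HasDerivAt.congr_deriv (f := HH) h ?_
    have h1 := (kk_pos hx.1.le hx.2).ne'
    have h3 := hx.1.ne'
    have h4 : 1 - x ≠ 0 := by linarith [hx.2]
    simp only [MM, show (2 - 1 : ℕ) = 1 from rfl, pow_one]
    field_simp
    ring
  refine strictMonoOn_of_deriv_pos (convex_Ioo 0 1)
    (fun x hx => (hd x hx).continuousAt.continuousWithinAt) (fun x hx => ?_)
  rw [interior_Ioo] at hx
  rw [(hd x hx).deriv]
  have h1 := kk_pos hx.1.le hx.2
  have h2 := kk_pos (m := 1 - x) (by linarith [hx.2]) (by linarith [hx.1])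
  have h3 := hx.1
  have h4 : 0 < 1 - x := by linarith [hx.2]
  have h5 := kk_cube_le hx.1.le hx.2
  have h6 := hh_lt_one (m := 1 - x) (by linarith [hx.2]) (by linarith [hx.1])
  have h7 : 0 < (1 - x) * kk x ^ 3 := by positivity
  have h8 : (1 - x) * kk x ^ 3 * hh (1 - x) < (1 - x) * kk x ^ 3 := by nlinarith
  have h9 : 0 < (Real.pi / 2) ^ 3 - (1 - x) * kk x ^ 3 * hh (1 - x) := by linarith
  positivity

noncomputable def GG (D m : ℝ) : ℝ :=
  -MM m + Real.log (1 - m) / 2 - Real.log m / 2 + D / MM m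

theorem GG_hasDeriv (D : ℝ) {x : ℝ} (hx : x ∈ Ioo (0:ℝ) 1) : HasDerivAt (GG D)
    (Real.pi ^ 2 / (8 * x * (1 - x) * kk x ^ 2) / MM x ^ 2 * (D - HH x)) x := by
  have h3 := hx.1.ne'
  have h4 : 1 - x ≠ 0 := by linarith [hx.2]
  have h5 := (MM_pos hx.1 hx.2).ne'
  have h := (((hasDerivAt_MM hx.1 hx.2).neg.add
    ((((hasDerivAt_id x).const_sub 1).log h4).div_const 2)).sub
    ((Real.hasDerivAt_log h3).div_const 2)).add
    ((hasDerivAt_const x D).div (hasDerivAt_MM hx.1 hx.2) h5)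
  refine HasDerivAt.congr_deriv (f := GG D) h ?_
  have h1 := (kk_pos hx.1.le hx.2).ne'
  have e : kk (1 - x) = MM x * kk x * 2 / Real.pi := by
    unfold MM; field_simp
  simp only [id, HH, e]
  field_simp
  ring

theorem GG_mono {m0 : ℝ} (h0 : 0 < m0) (hm0 : m0 < 1) : StrictMonoOn (GG (HH m0)) (Ioc 0 m0) := by
  have hsub : ∀ x ∈ Ioc (0:ℝ) m0, x ∈ Ioo (0:ℝ) 1 := fun x hx => ⟨hx.1, hx.2.trans_lt hm0⟩
  refine strictMonoOn_of_deriv_pos (convex_Ioc 0 m0)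
    (fun x hx => (GG_hasDeriv _ (hsub x hx)).continuousAt.continuousWithinAt) (fun x hx => ?_)
  rw [interior_Ioc] at hx
  have hx' := hsub x ⟨hx.1, hx.2.le⟩
  rw [(GG_hasDeriv _ hx').deriv]
  have h1 := kk_pos hx'.1.le hx'.2
  have h3 := hx'.1
  have h4 : 0 < 1 - x := by linarith [hx'.2]
  have h5 := MM_pos hx'.1 hx'.2
  have h6 : 0 < HH m0 - HH x := by linarith [HH_mono hx' ⟨h0, hm0⟩ hx.2]
  positivity

theorem GG_tendsto (D : ℝ) : Tendsto (GG D) (𝓝[>] 0) (𝓝 (-Real.log 4)) := by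
  have h1 : Tendsto (fun m : ℝ => Real.log (1 - m) / 2) (𝓝[>] 0) (𝓝 0) := by
    have hid : Tendsto (fun m : ℝ => m) (𝓝[>] 0) (𝓝 0) := tendsto_id.mono_left nhdsWithin_le_nhds
    have := ((hid.const_sub 1).log (by norm_num)).div_const 2
    simpa using this
  have h2 : Tendsto (fun m => D / MM m) (𝓝[>] 0) (𝓝 0) := MM_tendsto_atTop.const_div_atTop D
  have h := (MM_log_tendsto.neg.add h1).add h2
  simp only [add_zero] at h
  refine h.congr (fun m => ?_)
  unfold GG; ring

theorem GG_gt {m0 : ℝ} (h0 : 0 < m0) (hm0 : m0 < 1) {x : ℝ} (hx : x ∈ Ioc 0 m0) :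
    -Real.log 4 < GG (HH m0) x := by
  have hx2 : x / 2 ∈ Ioc 0 m0 := ⟨by linarith [hx.1], by linarith [hx.1, hx.2]⟩
  have h1 : GG (HH m0) (x / 2) < GG (HH m0) x :=
    GG_mono h0 hm0 hx2 hx (by linarith [hx.1])
  refine lt_of_le_of_lt ?_ h1
  refine le_of_tendsto (GG_tendsto (HH m0)) ?_
  filter_upwards [Ioo_mem_nhdsGT hx2.1] with y hy
  exact (GG_mono h0 hm0 ⟨hy.1, hy.2.le.trans hx2.2⟩ hx2 hy.2).le

noncomputable def phi (m : ℝ) : ℝ :=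
  Real.log m / 2 + Real.log (1 - m) / 2 + 2 / Real.pi * (kk m * kk (1 - m))

theorem hk_ge {m : ℝ} (h0 : 0 < m) (hm : m ≤ 1 / 2) : Real.pi / 2 ≤ hh m * kk (1 - m) := by
  have hd : ∀ x ∈ Ioc (0:ℝ) (1 / 2), HasDerivAt (fun m => hh m * kk (1 - m))
      (hd x * kk (1 - x) - hh x * hh (1 - x) / (2 * x)) x := by
    intro x hx
    have h := (hasDerivAt_hh (m := x) (by linarith [hx.2])).mul (hasDerivAt_kk' hx.1)
    refine HasDerivAt.congr_deriv (f := fun m => hh m * kk (1 - m)) h ?_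
    ring
  have hanti : AntitoneOn (fun m => hh m * kk (1 - m)) (Ioc 0 (1 / 2)) := by
    refine antitoneOn_of_deriv_nonpos (convex_Ioc 0 (1 / 2))
      (fun x hx => (hd x hx).continuousAt.continuousWithinAt) ?_ ?_
    · rw [interior_Ioc]
      exact fun x hx => (hd x ⟨hx.1, hx.2.le⟩).differentiableAt.differentiableWithinAt
    · rw [interior_Ioc]
      intro x hx
      have hx0 := hx.1
      have hx1 := hx.2
      rw [(hd x ⟨hx.1, hx.2.le⟩).deriv]
      have a1 := hd_le hx0.le hx1.le
      have a2 := kk_le (m := 1 - x) (by linarith) (by linarith)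
      have a3 := hh_ge hx0.le (by linarith)
      have a4 := hh_ge (m := 1 - x) (by linarith) (by linarith)
      have a5 := kk_pos (m := 1 - x) (by linarith) (by linarith)
      have e : (1 - (1 - x)) ^ (-(1/2) : ℝ) = (Real.sqrt x)⁻¹ := by
        rw [Real.rpow_neg (by linarith), Real.sqrt_eq_rpow]; ring_nf
      rw [e] at a2
      have s0 := Real.sqrt_pos.mpr hx0
      have s2 : Real.sqrt x ^ 2 = x := Real.sq_sqrt hx0.le
      have b1 : _root_.hd x * kk (1 - x) ≤
          (Real.sqrt 2 * Real.pi / 16) * (Real.pi / 2 * (Real.sqrt x)⁻¹) :=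
        mul_le_mul a1 a2 a5.le (by positivity)
      have b2 : (Real.pi / 4) * (Real.pi / 4) / (2 * x) ≤ hh x * hh (1 - x) / (2 * x) := by
        have := Real.pi_pos
        have : 0 ≤ hh x := le_trans (by positivity) a3
        gcongr
      have b3 : (Real.sqrt 2 * Real.pi / 16) * (Real.pi / 2 * (Real.sqrt x)⁻¹) ≤
          (Real.pi / 4) * (Real.pi / 4) / (2 * x) := by
        have c1 : Real.sqrt 2 * Real.sqrt x ≤ 1 := by
          rw [← Real.sqrt_mul (by norm_num)]
          exact Real.sqrt_le_iff.mpr ⟨by norm_num, by linarith⟩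
        have c2 : (Real.sqrt 2 * Real.pi / 16) * (Real.pi / 2 * (Real.sqrt x)⁻¹) =
            (Real.sqrt 2 * Real.sqrt x) * ((Real.pi / 4) * (Real.pi / 4) / (2 * x)) := by
          nth_rw 3 [← s2]
          field_simp
          norm_num
        rw [c2]
        exact mul_le_of_le_one_left (by positivity) c1
      linarith
  have h1 := hanti ⟨h0, hm⟩ ⟨by norm_num, le_rfl⟩ hm
  have h2 := legendre (m := 1 / 2) (by norm_num) (by norm_num)
  norm_num at h1 h2
  nlinarith

theorem phi_le_half {m : ℝ} (h0 : 0 < m) (hm : m ≤ 1 / 2) : phi m ≤ phi (1 / 2) := by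
  have hd : ∀ x ∈ Ioc (0:ℝ) (1 / 2), HasDerivAt phi
      ((2 / Real.pi * (hh x * kk (1 - x)) - 1) / (1 - x)) x := by
    intro x hx
    have hx0 := hx.1.ne'
    have h4 : 1 - x ≠ 0 := by linarith [hx.2]
    have h := (((Real.hasDerivAt_log hx0).div_const 2).add
      ((((hasDerivAt_id x).const_sub 1).log h4).div_const 2)).add
      (((hasDerivAt_kk (m := x) (by linarith [hx.2])).mul (hasDerivAt_kk' hx.1)).const_mul (2 / Real.pi))
    refine HasDerivAt.congr_deriv (f := phi) h ?_
    have hl := legendre hx.1 (by linarith [hx.2])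
    have hpi := Real.pi_ne_zero
    simp only [id]
    field_simp
    linear_combination (-2) * hl
  have hmono : MonotoneOn phi (Ioc 0 (1 / 2)) := by
    refine monotoneOn_of_deriv_nonneg (convex_Ioc 0 (1 / 2))
      (fun x hx => (hd x hx).continuousAt.continuousWithinAt) ?_ ?_
    · rw [interior_Ioc]
      exact fun x hx => (hd x ⟨hx.1, hx.2.le⟩).differentiableAt.differentiableWithinAt
    · rw [interior_Ioc]
      intro x hx
      rw [(hd x ⟨hx.1, hx.2.le⟩).deriv]
      have h1 := hk_ge hx.1 hx.2.le
      have hpi := Real.pi_pos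
      have h2 : 1 ≤ 2 / Real.pi * (hh x * kk (1 - x)) := by
        calc (1:ℝ) = 2 / Real.pi * (Real.pi / 2) := by field_simp
          _ ≤ _ := by gcongr
      exact div_nonneg (by linarith) (by linarith [hx.2])
  exact hmono ⟨h0, hm⟩ ⟨by norm_num, le_rfl⟩ hm

theorem phi_le {m : ℝ} (h0 : 0 < m) (hm : m < 1) : phi m ≤ phi (1 / 2) := by
  rcases le_total m (1 / 2) with h | h
  · exact phi_le_half h0 h
  · have h1 := phi_le_half (m := 1 - m) (by linarith) (by linarith)
    have e : phi (1 - m) = phi m := by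
      unfold phi
      rw [sub_sub_cancel]; ring
    rwa [e] at h1

theorem mu_eq {r : ℝ} (h0 : 0 < r) (h1 : r < 1) : mu r = MM (r ^ 2) := by
  have : 0 ≤ 1 - r ^ 2 := by nlinarith
  rw [mu, ellK_eq, ellK_eq, Real.sq_sqrt this, MM]

theorem exists_MM {m0 : ℝ} (h0 : 0 < m0) (hm0 : m0 < 1) {K : ℝ} (hK : 1 ≤ K) :
    ∃ m ∈ Ioc 0 m0, MM m = K * MM m0 := by
  have hM := MM_pos h0 hm0
  obtain ⟨x, hx1, hx2⟩ := ((MM_tendsto_atTop.eventually_ge_atTop (K * MM m0)).and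
    (Ioo_mem_nhdsGT h0)).exists
  have hc : ContinuousOn MM (Icc x m0) :=
    MM_cont.mono (fun y hy => ⟨hx2.1.trans_le hy.1, hy.2.trans_lt hm0⟩)
  obtain ⟨m, hm, hmm⟩ := intermediate_value_Icc' hx2.2.le hc
    (show K * MM m0 ∈ Icc (MM m0) (MM x) from ⟨by nlinarith, hx1⟩)
  exact ⟨m, ⟨hx2.1.trans_le hm.1, hm.2⟩, hmm⟩

theorem HH_eq {m : ℝ} (h0 : 0 < m) (hm : m < 1) :
    HH m = MM m * (2 / Real.pi * kk (1 - m) * kk m - MM m) := by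
  have h1 := (kk_pos h0.le hm).ne'
  have hpi := Real.pi_ne_zero
  unfold HH
  have e : kk (1 - m) = MM m * kk m * 2 / Real.pi := by
    unfold MM; field_simp
  have e2 : MM m * kk m * 2 / Real.pi * Real.pi / (2 * kk m) = MM m := by field_simp
  have : 2 / Real.pi * kk (1 - m) * kk m * MM m = kk (1 - m) ^ 2 := by
    rw [e]; field_simp
  linarith

theorem X_eq {m0 : ℝ} (h0 : 0 < m0) (hm0 : m0 < 1) {t K m e a b : ℝ} (ht : 0 < t)
    (hK : 0 < K) (h1t : 1 + t = 1 / m0)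
    (hm : m ∈ Ioc 0 m0) (hMK : MM m = K * MM m0) (he : e = 1 / m - 1)
    (ha : a = Real.log m0 / 2 + MM m0)
    (hb : b = Real.log (1 - m0) / 2 + (2 / Real.pi * kk (1 - m0) * kk m0 - MM m0)) :
    e / (t ^ (1 / K) * (1 + t) ^ (K - 1 / K)) =
      Real.exp (2 * (GG (HH m0) m + K * a - b / K)) := by
  have hmm : m < 1 := hm.2.trans_lt hm0
  have hm1 : 0 < 1 - m := by linarith
  have hm01 : 0 < 1 - m0 := by linarith
  have hmpos := hm.1
  have hM := MM_pos h0 hm0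
  have he' : e = Real.exp (Real.log (1 - m) - Real.log m) := by
    rw [Real.exp_sub, Real.exp_log hm1, Real.exp_log hmpos, he]
    field_simp
  have htt : Real.log t = Real.log (1 - m0) - Real.log m0 := by
    rw [← Real.log_div hm01.ne' h0.ne']
    congr 1
    have : t = 1 / m0 - 1 := by linarith
    rw [this]; field_simp
  have h1tt : Real.log (1 + t) = -Real.log m0 := by
    rw [h1t, one_div, Real.log_inv]
  rw [Real.rpow_def_of_pos ht, Real.rpow_def_of_pos (by linarith : 0 < 1 + t), he', ← Real.exp_add,
    ← Real.exp_sub, htt, h1tt]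
  congr 1
  rw [GG, HH_eq h0 hm0, hMK, ha, hb]
  field_simp
  ring

theorem main_aux (e : ℝ → ℝ) (t m0 A B c a b : ℝ) (ht : 0 < t) (h0 : 0 < m0) (hm0 : m0 < 1)
    (h1t : 1 + t = 1 / m0)
    (he : ∀ K, 1 ≤ K → ∀ m ∈ Ioc 0 m0, MM m = K * MM m0 → e K = 1 / m - 1)
    (ha : a = Real.log m0 / 2 + MM m0)
    (hb : b = Real.log (1 - m0) / 2 + (2 / Real.pi * kk (1 - m0) * kk m0 - MM m0))
    (hA : A = Real.exp a) (hB : B = Real.exp b)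
    (hc : c = 1 / 8 * Real.exp (2 * kk (1 / 2) ^ 2 / Real.pi)) (g : ℝ → ℝ)
    (hg : g = fun K : ℝ => A ^ (-K) * B ^ (1 / K) *
      (e K / (t ^ (1 / K) * (1 + t) ^ (K - 1 / K))) ^ ((1:ℝ) / 2)) :
    StrictAntiOn g (Set.Ici 1) ∧ g 1 = B / A ∧
    Filter.Tendsto g Filter.atTop (nhds (1 / 4)) ∧
    g '' Set.Ici 1 = Set.Ioc (1 / 4) (B / A) ∧
    ∀ K : ℝ, 1 < K →
      1 / 16 * A ^ (2 * K) * B ^ (-(2 / K)) <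
        e K / (t ^ (1 / K) * (1 + t) ^ (K - 1 / K)) ∧
      e K / (t ^ (1 / K) * (1 + t) ^ (K - 1 / K)) <
        A ^ (2 * (K - 1)) * B ^ (2 * (1 - 1 / K)) ∧
      A ^ (2 * (K - 1)) * B ^ (2 * (1 - 1 / K)) ≤
        (16:ℝ) ^ (K - 1) * c ^ (2 * (1 - 1 / K)) := by
  have hM := MM_pos h0 hm0
  have hsub : ∀ x ∈ Ioc (0:ℝ) m0, x ∈ Ioo (0:ℝ) 1 := fun x hx => ⟨hx.1, hx.2.trans_lt hm0⟩
  have hm0mem : m0 ∈ Ioc 0 m0 := ⟨h0, le_rfl⟩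
  have hX : ∀ K, 1 ≤ K → ∀ m ∈ Ioc 0 m0, MM m = K * MM m0 →
      e K / (t ^ (1 / K) * (1 + t) ^ (K - 1 / K)) =
      Real.exp (2 * (GG (HH m0) m + K * a - b / K)) := fun K hK m hm hMK =>
    X_eq h0 hm0 ht (by linarith) h1t hm hMK (he K hK m hm hMK) ha hb
  have hgG : ∀ K, 1 ≤ K → ∀ m ∈ Ioc 0 m0, MM m = K * MM m0 → g K = Real.exp (GG (HH m0) m) := by
    intro K hK m hm hMK
    have hK0 : K ≠ 0 := by linarith
    rw [hg]
    simp only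
    rw [hX K hK m hm hMK, hA, hB, ← Real.exp_mul, ← Real.exp_mul, ← Real.exp_mul, ← Real.exp_add,
      ← Real.exp_add]
    congr 1
    field_simp
    ring
  have hG0 : GG (HH m0) m0 = b - a := by
    rw [GG, HH_eq h0 hm0, ha, hb]
    field_simp
    ring
  have hBA : B / A = Real.exp (GG (HH m0) m0) := by rw [hG0, hA, hB, Real.exp_sub]
  have h4 : (1 / 4 : ℝ) = Real.exp (-Real.log 4) := by
    rw [Real.exp_neg, Real.exp_log (by norm_num)]; norm_num
  have hex : ∀ K : ℝ, ∃ m, 1 ≤ K → m ∈ Ioc 0 m0 ∧ MM m = K * MM m0 := by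
    intro K
    by_cases hK : 1 ≤ K
    · obtain ⟨m, h1, h2⟩ := exists_MM h0 hm0 hK
      exact ⟨m, fun _ => ⟨h1, h2⟩⟩
    · exact ⟨0, fun h => absurd h hK⟩
  choose s hs using hex
  have hgs : ∀ K, 1 ≤ K → g K = Real.exp (GG (HH m0) (s K)) := fun K hK =>
    hgG K hK _ (hs K hK).1 (hs K hK).2
  have hanti : StrictAntiOn g (Ici 1) := by
    intro K1 hK1 K2 hK2 hlt
    rw [hgs K1 hK1, hgs K2 hK2]
    have m1 := hs K1 hK1
    have m2 := hs K2 hK2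
    refine Real.exp_lt_exp.mpr (GG_mono h0 hm0 m2.1 m1.1 ?_)
    rw [← MM_anti.lt_iff_gt (hsub _ m1.1) (hsub _ m2.1), m1.2, m2.2]
    exact mul_lt_mul_of_pos_right hlt hM
  have hg1 : g 1 = B / A := by
    rw [hBA]
    exact hgG 1 le_rfl m0 hm0mem (by ring)
  have hgt : ∀ K, 1 ≤ K → 1 / 4 < g K := by
    intro K hK
    rw [hgs K hK, h4]
    exact Real.exp_lt_exp.mpr (GG_gt h0 hm0 (hs K hK).1)
  refine ⟨hanti, hg1, ?_, ?_, ?_⟩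
  · have hst : Tendsto s atTop (𝓝[>] 0) := by
      refine tendsto_nhdsWithin_iff.mpr ⟨?_, ?_⟩
      · refine tendsto_order.mpr ⟨fun y hy => ?_, fun y hy => ?_⟩
        · filter_upwards [eventually_ge_atTop 1] with K hK
          exact hy.trans (hs K hK).1.1
        · have hmin : min y m0 ∈ Ioc 0 m0 := ⟨lt_min hy h0, min_le_right _ _⟩
          filter_upwards [eventually_ge_atTop 1, eventually_gt_atTop (MM (min y m0) / MM m0)] with K hK hK2
          rw [div_lt_iff₀ hM, ← (hs K hK).2, MM_anti.lt_iff_gt (hsub _ hmin) (hsub _ (hs K hK).1)] at hK2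
          exact hK2.trans_le (min_le_left _ _)
      · filter_upwards [eventually_ge_atTop 1] with K hK
        exact (hs K hK).1.1
    rw [h4]
    refine ((Real.continuous_exp.tendsto _).comp ((GG_tendsto (HH m0)).comp hst)).congr' ?_
    filter_upwards [eventually_ge_atTop 1] with K hK
    exact (hgs K hK).symm
  · ext y
    constructor
    · rintro ⟨K, hK, rfl⟩
      refine ⟨hgt K hK, ?_⟩
      rw [← hg1]
      exact hanti.antitoneOn (mem_Ici.mpr le_rfl) hK hK
    · rintro ⟨hy1, hy2⟩
      have hy0 : 0 < y := by linarith
      have hl1 : -Real.log 4 < Real.log y := by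
        rw [Real.lt_log_iff_exp_lt hy0, ← h4]; exact hy1
      have hl2 : Real.log y ≤ GG (HH m0) m0 := by
        rw [Real.log_le_iff_le_exp hy0, ← hBA]; exact hy2
      obtain ⟨x, hx1, hx2⟩ := (((GG_tendsto (HH m0)).eventually_lt_const hl1).and
        (Ioo_mem_nhdsGT h0)).exists
      have hcont : ContinuousOn (GG (HH m0)) (Icc x m0) := fun z hz =>
        (GG_hasDeriv _ (hsub z ⟨hx2.1.trans_le hz.1, hz.2⟩)).continuousAt.continuousWithinAt
      obtain ⟨m, hm, hmm⟩ := intermediate_value_Icc hx2.2.le hcont ⟨hx1.le, hl2⟩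
      have hmI : m ∈ Ioc 0 m0 := ⟨hx2.1.trans_le hm.1, hm.2⟩
      have hK1 : 1 ≤ MM m / MM m0 := by
        rw [one_le_div hM]
        exact MM_anti.antitoneOn (hsub _ hmI) (hsub _ hm0mem) hmI.2
      refine ⟨MM m / MM m0, hK1, ?_⟩
      rw [hgG _ hK1 m hmI (by field_simp), hmm, Real.exp_log hy0]
  · intro K hK
    have hK0 : K ≠ 0 := by linarith
    have hKpos : 0 < K := by linarith
    have hsK := hs K hK.le
    rw [hX K hK.le _ hsK.1 hsK.2]
    refine ⟨?_, ?_, ?_⟩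
    · have e16 : (1 / 16 : ℝ) = Real.exp (2 * -Real.log 4) := by
        rw [two_mul, Real.exp_add, ← h4]; norm_num
      rw [e16, hA, hB, ← Real.exp_mul, ← Real.exp_mul, ← Real.exp_add, ← Real.exp_add,
        Real.exp_lt_exp]
      have := GG_gt h0 hm0 hsK.1
      have e1 : 2 * -Real.log 4 + a * (2 * K) + b * -(2 / K) = 2 * (-Real.log 4 + K * a - b / K) := by
        field_simp; ring
      rw [e1]
      linarith
    · have h := hanti (mem_Ici.mpr le_rfl) (mem_Ici.mpr hK.le) hK
      rw [hgs K hK.le, hg1, hBA, Real.exp_lt_exp, hG0] at h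
      rw [hA, hB, ← Real.exp_mul, ← Real.exp_mul, ← Real.exp_add, Real.exp_lt_exp]
      have e1 : a * (2 * (K - 1)) + b * (2 * (1 - 1 / K)) = 2 * (b - a + K * a - b / K) := by
        field_simp; ring
      rw [e1]
      linarith
    · have ha4 : a ≤ Real.log 4 := by
        rw [ha]; linarith [MM_log_le h0 hm0]
      have hab : a + b ≤ Real.log 4 + Real.log c := by
        have h1 := phi_le h0 hm0
        have e1 : phi m0 = a + b := by rw [phi, ha, hb]; ring
        have hc0 : Real.log c = -Real.log 8 + 2 * kk (1 / 2) ^ 2 / Real.pi := by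
          rw [hc, Real.log_mul (by norm_num) (Real.exp_ne_zero _), Real.log_exp, one_div, Real.log_inv]
        have l4 : Real.log 4 = 2 * Real.log 2 := by
          rw [show (4:ℝ) = 2 ^ 2 by norm_num, Real.log_pow]; norm_num
        have l8 : Real.log 8 = 3 * Real.log 2 := by
          rw [show (8:ℝ) = 2 ^ 3 by norm_num, Real.log_pow]; norm_num
        have e2 : phi (1 / 2) = Real.log 4 + Real.log c := by
          rw [phi, hc0, l4, l8, show (1:ℝ) - 1 / 2 = 1 / 2 by norm_num,
            show Real.log (1 / 2) = -Real.log 2 by rw [one_div, Real.log_inv]]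
          ring
        linarith
      have hcpos : 0 < c := by rw [hc]; positivity
      have l16 : Real.log 16 = 2 * Real.log 4 := by
        rw [show (16:ℝ) = 4 ^ 2 by norm_num, Real.log_pow]; norm_num
      rw [hA, hB, ← Real.exp_mul, ← Real.exp_mul, ← Real.exp_add,
        Real.rpow_def_of_pos (by norm_num : (0:ℝ) < 16), Real.rpow_def_of_pos hcpos, ← Real.exp_add,
        Real.exp_le_exp, l16]
      have e1 : a * (2 * (K - 1)) + b * (2 * (1 - 1 / K)) =
          2 * (K - 1) / K * ((K - 1) * a + (a + b)) := by
        field_simp; ring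
      have e2 : 2 * Real.log 4 * (K - 1) + Real.log c * (2 * (1 - 1 / K)) =
          2 * (K - 1) / K * ((K - 1) * Real.log 4 + (Real.log 4 + Real.log c)) := by
        field_simp; ring
      rw [e1, e2]
      have h1 : 0 < K - 1 := by linarith
      gcongr

theorem stmt_18 (eta : ℝ → ℝ → ℝ)
    (heta : ∀ K t : ℝ, 0 < K → 0 < t → ∀ u ∈ Set.Ioo (0:ℝ) 1,
      mu u = K * mu (1 / Real.sqrt (1 + t)) → eta K t = 1 / u ^ 2 - 1) (t : ℝ) (ht : 0 < t) (A B c : ℝ)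
    (hA : A = 1 / Real.sqrt (1 + t) * Real.exp (mu (1 / Real.sqrt (1 + t))))
    (hB : B = Real.sqrt (t / (1 + t)) * Real.exp (2 / Real.pi * ellK (Real.sqrt (t / (1 + t))) *
      ellK (1 / Real.sqrt (1 + t)) - mu (1 / Real.sqrt (1 + t))))
    (hc : c = 1 / 8 * Real.exp (2 * ellK (1 / Real.sqrt 2) ^ 2 / Real.pi)) (g : ℝ → ℝ)
    (hg : g = fun K : ℝ => A ^ (-K) * B ^ (1 / K) *
      (eta K t / (t ^ (1 / K) * (1 + t) ^ (K - 1 / K))) ^ ((1:ℝ) / 2)) :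
    StrictAntiOn g (Set.Ici 1) ∧ g 1 = B / A ∧
    Filter.Tendsto g Filter.atTop (nhds (1 / 4)) ∧
    g '' Set.Ici 1 = Set.Ioc (1 / 4) (B / A) ∧
    ∀ K : ℝ, 1 < K →
      1 / 16 * A ^ (2 * K) * B ^ (-(2 / K)) <
        eta K t / (t ^ (1 / K) * (1 + t) ^ (K - 1 / K)) ∧
      eta K t / (t ^ (1 / K) * (1 + t) ^ (K - 1 / K)) <
        A ^ (2 * (K - 1)) * B ^ (2 * (1 - 1 / K)) ∧
      A ^ (2 * (K - 1)) * B ^ (2 * (1 - 1 / K)) ≤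
        (16:ℝ) ^ (K - 1) * c ^ (2 * (1 - 1 / K)) := by
  have h1t : 0 < 1 + t := by linarith
  set m0 : ℝ := 1 / (1 + t) with hm0def
  have h0 : 0 < m0 := by positivity
  have hm0 : m0 < 1 := by rw [hm0def, div_lt_one h1t]; linarith
  have er : 1 / Real.sqrt (1 + t) = Real.sqrt m0 := by
    rw [hm0def, one_div, one_div, Real.sqrt_inv]
  have er2 : t / (1 + t) = 1 - m0 := by rw [hm0def]; field_simp; ring
  have es : ∀ m : ℝ, 0 < m → m < 1 → mu (Real.sqrt m) = MM m := by
    intro m hm hm1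
    rw [mu_eq (Real.sqrt_pos.mpr hm) (by rw [Real.sqrt_lt' one_pos]; linarith), Real.sq_sqrt hm.le]
  have emu : mu (1 / Real.sqrt (1 + t)) = MM m0 := by rw [er, es m0 h0 hm0]
  have elog : ∀ m : ℝ, 0 < m → Real.sqrt m = Real.exp (Real.log m / 2) := by
    intro m hm
    rw [← Real.log_sqrt hm.le, Real.exp_log (Real.sqrt_pos.mpr hm)]
  refine main_aux (fun K => eta K t) t m0 A B c _ _ ht h0 hm0 (by rw [hm0def]; simp) ?_ rfl rfl ?_ ?_ ?_ g hg
  · intro K hK m hm hMK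
    have hm1 : m < 1 := hm.2.trans_lt hm0
    have h := heta K t (by linarith) ht (Real.sqrt m)
      ⟨Real.sqrt_pos.mpr hm.1, by rw [Real.sqrt_lt' one_pos]; linarith⟩
      (by rw [emu, es m hm.1 hm1, hMK])
    rw [Real.sq_sqrt hm.1.le] at h
    exact h
  · rw [hA, emu, er, elog m0 h0, Real.exp_add]
  · rw [hB, emu, er, er2, ellK_eq, ellK_eq, Real.sq_sqrt (by linarith), Real.sq_sqrt h0.le,
      elog (1 - m0) (by linarith), Real.exp_add]
  · rw [hc, ellK_eq]
    norm_num
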